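/- Let f : X → Y be a fully closed continuous surjection of a compact Hausdorff space X onto a metrizable compact space Y with metrizable fibers f⁻¹(y), y ∈ Y. For every h ∈ C(X) and every m ∈ ℕ set K_m = {y ∈ Y : Ω_f(h)(y) ≥ 1/m}. Then each K_m is finite, the sequence {K_m} is increasing, dist(h, Z_{K_m}) ≤ 1/m for every m, and hence h belongs to the norm-closure of the linear span of ∪_{m∈ℕ} Z_{K_m}. -/

import Mathlib

open Set Metric Topology Filter

/-- A continuous map of compacts is fully closed if images of disjoint closed sets
have finite intersection. -/
def FullyClosed {X Y : Type*} [TopologicalSpace X] [TopologicalSpace Y] (f : X → Y) : Prop :=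
  ∀ A B : Set X, IsClosed A → IsClosed B → Disjoint A B → (f '' A ∩ f '' B).Finite

/-- The fiberwise oscillation `Ω_f(h)(y) = diam (h '' (f⁻¹ {y}))`. -/
noncomputable def fiberOsc {X Y : Type*} [TopologicalSpace X]
    (f : X → Y) (h : C(X, ℝ)) (y : Y) : ℝ :=
  Metric.diam (h '' (f ⁻¹' {y}))

/-!
Cover the range of `h` by finitely many small balls: a fiber of large oscillation joins one such
ball to the complement of a concentric larger one, so full closedness leaves only finitely many of
them. If every fiber over `Y ∖ K` has oscillation less than `ε`, collapse each of these fibers to a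
point. Full closedness makes the quotient map closed, so the quotient is again compact and normal,
and a partition of unity on it glues nearby values of `h` into a function within `ε` of `h`.
-/

theorem normalSpace_of_isClosedMap {X Y : Type*} [TopologicalSpace X] [NormalSpace X]
    [TopologicalSpace Y] {p : X → Y} (hcont : Continuous p) (hsurj : Function.Surjective p)
    (hclosed : IsClosedMap p) : NormalSpace Y where
  normal A B hA hB hAB := by
    obtain ⟨U, V, hU, hV, hAU, hBV, hUV⟩ := normal_separation (hA.preimage hcont)
      (hB.preimage hcont) (hAB.preimage p)
    refine ⟨kernImage p U, kernImage p V, isClosedMap_iff_kernImage.1 hclosed hU,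
      isClosedMap_iff_kernImage.1 hclosed hV, subset_kernImage_iff.2 hAU,
      subset_kernImage_iff.2 hBV, Set.disjoint_left.2 fun y hyU hyV => ?_⟩
    obtain ⟨x, rfl⟩ := hsurj y
    exact Set.disjoint_left.1 hUV (hyU rfl) (hyV rfl)

theorem exists_dist_comp_lt_of_isClosedMap {X Q E : Type*} [TopologicalSpace X]
    [TopologicalSpace Q] [NormalSpace Q] [ParacompactSpace Q] [SeminormedAddCommGroup E]
    [NormedSpace ℝ E] {p : X → Q} (hp : IsClosedMap p) {h : X → E} (hh : Continuous h) {ε : ℝ}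
    (hε : ∀ x x', p x = p x' → dist (h x) (h x') < ε) :
    ∃ k : C(Q, E), ∀ x, dist (h x) (k (p x)) < ε := by
  have exists_near_on_fiber (q : Q) : ∃ c : E, ∀ x, p x = q → dist (h x) c < ε := by
    by_cases hq : ∃ x₀, p x₀ = q
    · obtain ⟨x₀, rfl⟩ := hq
      exact ⟨h x₀, fun x hx => hε x x₀ hx⟩
    · exact ⟨0, fun x hx => (hq ⟨x, hx⟩).elim⟩
  obtain ⟨k, hk⟩ := exists_continuous_forall_mem_convex_of_local_const
    (t := fun q : Q => ⋂ x ∈ p ⁻¹' {q}, ball (h x) ε)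
    (fun q => convex_iInter₂ fun x _ => convex_ball (h x) ε) fun q => by
      obtain ⟨c, hc⟩ := exists_near_on_fiber q
      have near_nhds : ∀ᶠ q' in 𝓝 q, ∀ x ∈ p ⁻¹' {q'}, dist (h x) c < ε :=
        hp.eventually_nhds_fiber q fun x hx =>
          (hh.dist continuous_const).continuousAt.eventually_lt_const (hc x hx)
      exact ⟨c, near_nhds.mono fun q' hq' =>
        mem_iInter₂.2 fun x hx => mem_ball'.2 (hq' x hx)⟩
  exact ⟨k, fun x => mem_ball'.1 (mem_iInter₂.1 (hk (p x)) x rfl)⟩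

theorem FullyClosed.finite_setOf_le_diam_image_fiber {X Y M : Type*} [TopologicalSpace X]
    [TopologicalSpace Y] [PseudoMetricSpace M] {f : X → Y} (hfc : FullyClosed f) {h : X → M}
    (hh : Continuous h) (hrange : TotallyBounded (range h)) {ε : ℝ} (hε : 0 < ε) :
    {y : Y | ε ≤ diam (h '' (f ⁻¹' {y}))}.Finite := by
  obtain ⟨t, ht, hcover⟩ := Metric.totallyBounded_iff.1 hrange (ε / 8) (by positivity)
  have finite_of_center (c : M) :
      (f '' {x | dist (h x) c ≤ ε / 8} ∩ f '' {x | ε / 4 ≤ dist (h x) c}).Finite := by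
    refine hfc _ _ (isClosed_le (hh.dist continuous_const) continuous_const)
      (isClosed_le continuous_const (hh.dist continuous_const)) (Set.disjoint_left.2 ?_)
    intro x (hnear : dist (h x) c ≤ ε / 8) (hfar : ε / 4 ≤ dist (h x) c)
    linarith
  refine (ht.biUnion fun c _ => finite_of_center c).subset fun y (hy : ε ≤ _) => ?_
  obtain ⟨a, b, ha, hb, hab⟩ : ∃ a b, f a = y ∧ f b = y ∧ ε / 2 < dist (h a) (h b) := by
    by_contra! hsmall
    have : diam (h '' (f ⁻¹' {y})) ≤ ε / 2 := by
      refine diam_le_of_forall_dist_le (by positivity) ?_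
      rintro _ ⟨a, ha, rfl⟩ _ ⟨b, hb, rfl⟩
      exact hsmall a b ha hb
    linarith
  obtain ⟨c, hc, hac⟩ := mem_iUnion₂.1 (hcover (mem_range_self a))
  rw [mem_ball] at hac
  have hbc : ε / 4 ≤ dist (h b) c := by linarith [dist_triangle_right (h a) (h b) c]
  exact mem_iUnion₂.2 ⟨c, hc, ⟨a, hac.le, ha⟩, b, hbc, hb⟩

theorem FullyClosed.isClosed_union_preimage_image_diff {X Y : Type*} [TopologicalSpace X]
    [RegularSpace X] [TopologicalSpace Y] [T1Space Y] {f : X → Y} (hfc : FullyClosed f)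
    (hf : Continuous f) {A : Set X} (hA : IsClosed A) (K : Set Y) :
    IsClosed (A ∪ f ⁻¹' (f '' A \ K)) := by
  refine isClosed_of_closure_subset ?_
  rw [closure_union, hA.closure_eq]
  rintro x (hxA | hx)
  · exact Or.inl hxA
  by_cases hxA : x ∈ A
  · exact Or.inl hxA
  obtain ⟨V, hV, hVclosed, hVA⟩ := exists_mem_nhds_isClosed_subset (hA.isOpen_compl.mem_nhds hxA)
  have hfin : (f '' V ∩ f '' A).Finite :=
    hfc V A hVclosed hA (Set.disjoint_right.2 fun _ hzA hzV => hVA hzV hzA)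
  -- Near `x`, the union meets only the fibers over a finite set, and those form a closed set.
  have hclosed : IsClosed (f ⁻¹' ((f '' V ∩ f '' A) \ K)) := hfin.sdiff.isClosed.preimage hf
  have hfreq : ∃ᶠ z in 𝓝 x, z ∈ f ⁻¹' ((f '' V ∩ f '' A) \ K) :=
    ((mem_closure_iff_frequently.1 hx).and_eventually hV).mono
      fun z ⟨⟨hzA, hzK⟩, hzV⟩ => ⟨⟨mem_image_of_mem f hzV, hzA⟩, hzK⟩
  obtain ⟨⟨-, hfxA⟩, hfxK⟩ := hclosed.closure_subset (mem_closure_iff_frequently.2 hfreq)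
  exact Or.inr ⟨hfxA, hfxK⟩

/-- The equivalence relation on `X` that collapses each fiber of `f` over a point of `Y ∖ K` to a
single point and leaves the fibers over `K` untouched. -/
def collapseOff {X Y : Type*} (f : X → Y) (K : Set Y) : Setoid X where
  r x x' := x = x' ∨ f x = f x' ∧ f x ∉ K
  iseqv :=
    { refl := fun _ => Or.inl rfl
      symm := by grind
      trans := by grind }

theorem collapseOff_mk_eq_iff {X Y : Type*} {f : X → Y} {K : Set Y} {x x' : X} :
    Quotient.mk (collapseOff f K) x = Quotient.mk (collapseOff f K) x' ↔
      x = x' ∨ f x = f x' ∧ f x ∉ K :=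
  Quotient.eq

theorem collapseOff_preimage_image_mk {X Y : Type*} (f : X → Y) (K : Set Y) (A : Set X) :
    Quotient.mk (collapseOff f K) ⁻¹' (Quotient.mk (collapseOff f K) '' A) =
      A ∪ f ⁻¹' (f '' A \ K) := by
  ext x
  simp only [mem_preimage, mem_image, collapseOff_mk_eq_iff, mem_union, Set.mem_sdiff]
  grind

theorem FullyClosed.isClosedMap_collapseOff_mk {X Y : Type*} [TopologicalSpace X] [RegularSpace X]
    [TopologicalSpace Y] [T1Space Y] {f : X → Y} (hfc : FullyClosed f) (hf : Continuous f)
    (K : Set Y) : IsClosedMap (Quotient.mk (collapseOff f K)) := fun A hA => by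
  have hquot : IsQuotientMap (Quotient.mk (collapseOff f K)) := isQuotientMap_quotient_mk'
  rw [← hquot.isClosed_preimage, collapseOff_preimage_image_mk]
  exact hfc.isClosed_union_preimage_image_diff hf hA K

/-- The superlevel set `{y | ε ≤ Ω_f(h)(y)}` of the fiberwise oscillation; the set `K_m` is
`oscSuperlevel f h (1 / m)`. -/
def oscSuperlevel {X Y : Type*} [TopologicalSpace X] (f : X → Y) (h : C(X, ℝ)) (ε : ℝ) : Set Y :=
  {y | ε ≤ fiberOsc f h y}

/-- The set `Z_K` of functions with zero oscillation on every fiber over a point of `Y ∖ K`. -/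
def zeroOscOff {X Y : Type*} [TopologicalSpace X] (f : X → Y) (K : Set Y) : Set C(X, ℝ) :=
  {g | ∀ y ∉ K, fiberOsc f g y = 0}

section

variable {X Y : Type*} [TopologicalSpace X] {f : X → Y}

theorem comp_collapseOff_mk_mem_zeroOscOff (K : Set Y) (k : C(Quotient (collapseOff f K), ℝ)) :
    k.comp ⟨Quotient.mk (collapseOff f K), continuous_quotient_mk'⟩ ∈ zeroOscOff f K := by
  intro y hy
  refine diam_subsingleton ?_
  rintro _ ⟨a, rfl, rfl⟩ _ ⟨b, hb, rfl⟩
  exact congrArg k (collapseOff_mk_eq_iff.2 (Or.inr ⟨hb.symm, hy⟩))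

theorem antitone_oscSuperlevel (f : X → Y) (h : C(X, ℝ)) : Antitone (oscSuperlevel f h) :=
  fun _ _ hδε _ hy => hδε.trans hy

variable [CompactSpace X]

theorem dist_le_fiberOsc (h : C(X, ℝ)) {x x' : X} (hx : f x = f x') :
    dist (h x) (h x') ≤ fiberOsc f h (f x) :=
  dist_le_diam_of_mem ((isCompact_range h.continuous).isBounded.subset (image_subset_range _ _))
    (mem_image_of_mem h rfl) (mem_image_of_mem h hx.symm)

variable [TopologicalSpace Y]

theorem FullyClosed.finite_oscSuperlevel (hfc : FullyClosed f) (h : C(X, ℝ)) {ε : ℝ} (hε : 0 < ε) :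
    (oscSuperlevel f h ε).Finite :=
  hfc.finite_setOf_le_diam_image_fiber h.continuous
    (isCompact_range h.continuous).totallyBounded hε

variable [R1Space X] [T1Space Y]

theorem FullyClosed.exists_mem_zeroOscOff_dist_lt (hfc : FullyClosed f) (hf : Continuous f)
    (h : C(X, ℝ)) {ε : ℝ} (hε : 0 < ε) {K : Set Y} (hK : ∀ y ∉ K, fiberOsc f h y < ε) :
    ∃ g ∈ zeroOscOff f K, dist h g < ε := by
  have hclosed := hfc.isClosedMap_collapseOff_mk hf K
  have : NormalSpace (Quotient (collapseOff f K)) :=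
    normalSpace_of_isClosedMap continuous_quotient_mk' Quotient.mk_surjective hclosed
  obtain ⟨k, hk⟩ := exists_dist_comp_lt_of_isClosedMap hclosed h.continuous fun x x' hxx' => by
    obtain rfl | ⟨hfx, hxK⟩ := collapseOff_mk_eq_iff.1 hxx'
    · rwa [dist_self]
    · exact (dist_le_fiberOsc h hfx).trans_lt (hK (f x) hxK)
  exact ⟨_, comp_collapseOff_mk_mem_zeroOscOff K k, (ContinuousMap.dist_lt_iff hε).2 hk⟩

theorem FullyClosed.exists_mem_zeroOscOff_oscSuperlevel_dist_lt (hfc : FullyClosed f)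
    (hf : Continuous f) (h : C(X, ℝ)) {ε : ℝ} (hε : 0 < ε) :
    ∃ g ∈ zeroOscOff f (oscSuperlevel f h ε), dist h g < ε :=
  hfc.exists_mem_zeroOscOff_dist_lt hf h hε fun _ hy => not_le.1 hy

theorem FullyClosed.mem_closure_iUnion_zeroOscOff (hfc : FullyClosed f) (hf : Continuous f)
    (h : C(X, ℝ)) :
    h ∈ closure (⋃ m : ℕ, zeroOscOff f (oscSuperlevel f h (1 / ((m : ℝ) + 1)))) := by
  refine Metric.mem_closure_iff.2 fun ε hε => ?_
  obtain ⟨m, hm⟩ := exists_nat_one_div_lt hε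
  obtain ⟨g, hg, hdist⟩ :=
    hfc.exists_mem_zeroOscOff_oscSuperlevel_dist_lt hf h (Nat.one_div_pos_of_nat (n := m))
  exact ⟨g, mem_iUnion.2 ⟨m, hg⟩, hdist.trans hm⟩

theorem mem_closure_span_ZKm_general (hf : Continuous f) (hfc : FullyClosed f) (h : C(X, ℝ)) :
    (∀ m : ℕ, (oscSuperlevel f h (1 / ((m : ℝ) + 1))).Finite) ∧
    (∀ m n : ℕ, m ≤ n →
      oscSuperlevel f h (1 / ((m : ℝ) + 1)) ⊆ oscSuperlevel f h (1 / ((n : ℝ) + 1))) ∧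
    (∀ m : ℕ, infDist h (zeroOscOff f (oscSuperlevel f h (1 / ((m : ℝ) + 1)))) ≤
      1 / ((m : ℝ) + 1)) ∧
    h ∈ closure (Submodule.span ℝ
      (⋃ m : ℕ, zeroOscOff f (oscSuperlevel f h (1 / ((m : ℝ) + 1)))) : Set C(X, ℝ)) := by
  refine ⟨fun m => hfc.finite_oscSuperlevel h Nat.one_div_pos_of_nat,
    fun m n hmn => antitone_oscSuperlevel f h (Nat.one_div_le_one_div hmn), fun m => ?_,
    closure_mono Submodule.subset_span (hfc.mem_closure_iUnion_zeroOscOff hf h)⟩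
  obtain ⟨g, hg, hdist⟩ :=
    hfc.exists_mem_zeroOscOff_oscSuperlevel_dist_lt hf h (Nat.one_div_pos_of_nat (n := m))
  exact (infDist_le_dist_of_mem hg).trans hdist.le

end

/-- Proposition 3.5: with `K_m = {y : Ω_f(h)(y) ≥ 1/m}` (here indexed so
that the `m`-th set corresponds to `1/(m+1)`, `m : ℕ`), each `K_m` is finite, the sequence
is increasing, `dist(h, Z_{K_m}) ≤ 1/(m+1)`, and `h` lies in the closed linear span of
`⋃ₘ Z_{K_m}`. -/
theorem mem_closure_span_ZKm
    {X Y : Type*} [TopologicalSpace X] [CompactSpace X] [T2Space X]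
    [TopologicalSpace Y] [CompactSpace Y] [T2Space Y] [TopologicalSpace.MetrizableSpace Y]
    (f : X → Y) (hf : Continuous f) (hsurj : Function.Surjective f)
    (hfc : FullyClosed f)
    (hfib : ∀ y : Y, TopologicalSpace.MetrizableSpace (f ⁻¹' {y}))
    (h : C(X, ℝ)) :
    (∀ m : ℕ, {y : Y | 1 / ((m : ℝ) + 1) ≤ fiberOsc f h y}.Finite) ∧
    (∀ m n : ℕ, m ≤ n →
      {y : Y | 1 / ((m : ℝ) + 1) ≤ fiberOsc f h y} ⊆
        {y : Y | 1 / ((n : ℝ) + 1) ≤ fiberOsc f h y}) ∧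
    (∀ m : ℕ,
      Metric.infDist h
          {g : C(X, ℝ) |
            ∀ y ∉ {y : Y | 1 / ((m : ℝ) + 1) ≤ fiberOsc f h y}, fiberOsc f g y = 0} ≤
        1 / ((m : ℝ) + 1)) ∧
    h ∈ closure (Submodule.span ℝ
        (⋃ m : ℕ, {g : C(X, ℝ) |
          ∀ y ∉ {y : Y | 1 / ((m : ℝ) + 1) ≤ fiberOsc f h y}, fiberOsc f g y = 0}) :
      Set C(X, ℝ)) :=
  mem_closure_span_ZKm_general hf hfc h
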